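/- Let B be a block configuration on the torus T_{n,m} such that for every block-free square p, a robot starting at p can pass over every square not in B. Then |B| ≥ min(n,m). More precisely, if there exist a row R_i and a column C_j both containing no block of B, then a robot starting at their intersection (i,j) can never leave the set of squares R_i ∪ C_j. -/

import Mathlib

/-- Squares of the torus `T_{n,m}`: (row, column) pairs taken modulo `n` and `m`. -/
abbrev TSq (n m : ℕ) : Type := ZMod n × ZMod m

/-- The four axis directions on the torus. -/
def dirsT (n m : ℕ) : Set (TSq n m) := {(1, 0), (-1, 0), (0, 1), (0, -1)}

/-- Sliding from `p` in direction `d` travels exactly `k` steps: all squares along the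
way are block-free and the robot stops on the square immediately before the first
block of `B` encountered in direction `d`.  If the relevant row or column contains no
block, no such `k` exists and the move is impossible. -/
def IsSlideT {n m : ℕ} (B : Finset (TSq n m)) (p d : TSq n m) (k : ℕ) : Prop :=
  (∀ t : ℕ, t ≤ k → p + t • d ∉ B) ∧ p + (k + 1) • d ∈ B

/-- One move of the robot on the torus. -/
def MoveT {n m : ℕ} (B : Finset (TSq n m)) (p q : TSq n m) : Prop :=
  ∃ d ∈ dirsT n m, ∃ k : ℕ, IsSlideT B p d k ∧ q = p + k • d

/-- The robot, starting on `p`, can stop on `q` after a finite sequence of moves. -/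
def ReachesT {n m : ℕ} (B : Finset (TSq n m)) : TSq n m → TSq n m → Prop :=
  Relation.ReflTransGen (MoveT B)

/-- The robot, starting on `p₀`, passes over the square `s`: during some move of a
finite sequence of moves it occupies or slides through `s`. -/
def PassesT {n m : ℕ} (B : Finset (TSq n m)) (p₀ s : TSq n m) : Prop :=
  ∃ p, ReachesT B p₀ p ∧ ∃ d ∈ dirsT n m, ∃ k t : ℕ,
    IsSlideT B p d k ∧ t ≤ k ∧ s = p + t • d

/-- `B` solves the block-pass game on the torus from the block-free starting square
`p₀`: the robot can pass over every square not in `B`. -/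
def SolvesPassT {n m : ℕ} (B : Finset (TSq n m)) (p₀ : TSq n m) : Prop :=
  p₀ ∉ B ∧ ∀ s : TSq n m, s ∉ B → PassesT B p₀ s

/-- `opt^P_B(T_{n,m})`: the minimum number of blocks solving the block-pass game on
the torus (from some fixed block-free starting square). -/
noncomputable def optPBT (n m : ℕ) : ℕ :=
  sInf {k | ∃ B : Finset (TSq n m), ∃ p₀ : TSq n m, SolvesPassT B p₀ ∧ B.card = k}

/-!
The first move of the robot ends next to a block lying in the row or the column of its starting
square, so a robot at the intersection of a block-free row and a block-free column is stuck.
Since `B` meets at most `|B|` rows and at most `|B|` columns, such an intersection exists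
whenever `|B| < min n m`. `PassesT` only counts squares covered during an actual move, so a stuck
robot does not even pass over the square it stands on.
-/

theorem exists_forall_mem_ne_of_card_lt {α β : Type*} {s : Finset α} (f : α → β)
    (hs : s.card < Nat.card β) : ∃ b, ∀ a ∈ s, f a ≠ b := by
  classical
  have : Finite β := Nat.finite_of_card_ne_zero (Nat.ne_zero_of_lt hs)
  have : Fintype β := Fintype.ofFinite β
  have himage : (s.image f).card < (Finset.univ : Finset β).card := by
    rw [Finset.card_univ, ← Nat.card_eq_fintype_card]
    exact Finset.card_image_le.trans_lt hs
  obtain ⟨b, -, hb⟩ := Finset.exists_mem_notMem_of_card_lt_card himage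
  exact ⟨b, fun a ha hab => hb (Finset.mem_image.2 ⟨a, ha, hab⟩)⟩

section

variable {n m : ℕ} {B : Finset (TSq n m)} {p q s : TSq n m}

theorem fst_eq_zero_or_snd_eq_zero_of_mem_dirsT {d : TSq n m} (hd : d ∈ dirsT n m) :
    d.1 = 0 ∨ d.2 = 0 := by
  rcases hd with rfl | rfl | rfl | rfl <;> simp

theorem MoveT.exists_mem_fst_eq_or_snd_eq (h : MoveT B p q) :
    ∃ b ∈ B, b.1 = p.1 ∨ b.2 = p.2 := by
  obtain ⟨d, hd, k, ⟨-, hblock⟩, -⟩ := h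
  exact ⟨_, hblock, (fst_eq_zero_or_snd_eq_zero_of_mem_dirsT hd).imp
    (fun hd₁ => by simp [hd₁]) (fun hd₂ => by simp [hd₂])⟩

theorem PassesT.exists_moveT (h : PassesT B p s) : ∃ q, MoveT B p q := by
  obtain ⟨r, hpr, d, hd, k, -, hslide, -, -⟩ := h
  rcases hpr.cases_head with rfl | ⟨q, hpq, -⟩
  · exact ⟨_, d, hd, k, hslide, rfl⟩
  · exact ⟨q, hpq⟩

theorem not_moveT_of_row_col_empty {i : ZMod n} {j : ZMod m}
    (hi : ∀ b ∈ B, b.1 ≠ i) (hj : ∀ b ∈ B, b.2 ≠ j) : ¬ MoveT B (i, j) q := by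
  intro h
  obtain ⟨b, hb, hrow | hcol⟩ := h.exists_mem_fst_eq_or_snd_eq
  · exact hi b hb hrow
  · exact hj b hb hcol

theorem min_le_card_of_forall_exists_moveT (h : ∀ p ∉ B, ∃ q, MoveT B p q) :
    min n m ≤ B.card := by
  by_contra! hlt
  obtain ⟨hn, hm⟩ := lt_min_iff.1 hlt
  obtain ⟨i, hi⟩ := exists_forall_mem_ne_of_card_lt Prod.fst (hn.trans_eq (Nat.card_zmod n).symm)
  obtain ⟨j, hj⟩ := exists_forall_mem_ne_of_card_lt Prod.snd (hm.trans_eq (Nat.card_zmod m).symm)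
  obtain ⟨q, hq⟩ := h (i, j) fun hB => hi _ hB rfl
  exact not_moveT_of_row_col_empty hi hj hq

end

theorem stmt19_general (n m : ℕ) (B : Finset (TSq n m)) :
    ((∀ p ∉ B, ∃ q, MoveT B p q) → min n m ≤ B.card) ∧
    (∀ (i : ZMod n) (j : ZMod m), (∀ b ∈ B, b.1 ≠ i) → (∀ b ∈ B, b.2 ≠ j) →
      ∀ q, ¬ MoveT B (i, j) q) :=
  ⟨min_le_card_of_forall_exists_moveT, fun _ _ hi hj _ => not_moveT_of_row_col_empty hi hj⟩

/-- If `B` is a block configuration on the torus `T_{n,m}` such that from every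
block-free starting square the robot can pass over every square not in `B`, then
`|B| ≥ min(n,m)`.  More precisely, if row `R_i` and column `C_j` contain no block,
then a robot starting at `(i,j)` can never leave `R_i ∪ C_j`. -/
theorem stmt19 (n m : ℕ) (hn : 1 ≤ n) (hm : 1 ≤ m) (B : Finset (TSq n m)) :
    ((∀ p : TSq n m, p ∉ B → ∀ s : TSq n m, s ∉ B → PassesT B p s) →
      min n m ≤ B.card) ∧
    (∀ (i : ZMod n) (j : ZMod m), (∀ q ∈ B, q.1 ≠ i) → (∀ q ∈ B, q.2 ≠ j) →
      ∀ s : TSq n m, PassesT B (i, j) s → s.1 = i ∨ s.2 = j) := by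
  obtain ⟨hcard, hstuck⟩ := stmt19_general n m B
  exact ⟨fun h => hcard fun p hp => (h p hp p hp).exists_moveT,
    fun i j hi hj s hs => (not_exists.2 (hstuck i j hi hj) hs.exists_moveT).elim⟩
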